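/- For every element u of the quotient group B_n/⟨Δ²⟩, the word length ‖u‖ of u with respect to the images of the simple elements satisfies ‖u‖ ≤ (n(n−1)/2) · |u|_{G_n}, where |u|_{G_n} is the word length of u, viewed as an element of the mapping class group MCG(S_{n+1}) of the (n+1)-times punctured sphere, with respect to the generating set G_n consisting of the images of the simple elements together with the rotation ρ. -/

import Mathlib

namespace Braids

/-- The braid relations on `n` strands (Artin generators `σ_i`, `i : Fin (n-1)`):
`σ_i σ_j σ_i = σ_j σ_i σ_j` for `|i-j| = 1` and `σ_i σ_j = σ_j σ_i` for `|i-j| ≥ 2`. -/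
def braidRels (n : ℕ) : Set (FreeGroup (Fin (n - 1))) :=
  {r | (∃ i j : Fin (n - 1), (i : ℕ) + 1 = (j : ℕ) ∧
          r = .of i * .of j * .of i * (.of j * .of i * .of j)⁻¹) ∨
       (∃ i j : Fin (n - 1), (i : ℕ) + 2 ≤ (j : ℕ) ∧
          r = .of i * .of j * (.of j * .of i)⁻¹)}

/-- The braid group on `n` strands. -/
abbrev Braid (n : ℕ) := PresentedGroup (braidRels n)

/-- The Artin generator `σ_i` of the braid group on `n` strands. -/
def σ {n : ℕ} (i : Fin (n - 1)) : Braid n := PresentedGroup.of i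

/-- The Artin generator, with out-of-range indices mapped to `1`. -/
def σ' (n : ℕ) (i : ℕ) : Braid n := if h : i < n - 1 then σ ⟨i, h⟩ else 1

/-- The monoid of positive braids. -/
def Pos (n : ℕ) : Submonoid (Braid n) := Submonoid.closure (Set.range (σ (n := n)))

/-- The prefix order: `x ≼ y` iff `x⁻¹ * y` is a positive braid. -/
def PrefixLE {n : ℕ} (x y : Braid n) : Prop := x⁻¹ * y ∈ Pos n

/-- The Garside half-twist `Δ = σ₁(σ₂σ₁)(σ₃σ₂σ₁)⋯(σ_{n-1}⋯σ₁)` (0-based indices). -/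
def Δ (n : ℕ) : Braid n :=
  ((((List.range (n - 1)).map fun k => (List.range (k + 1)).reverse).flatten).map (σ' n)).prod

/-- A braid is simple (a positive permutation braid) if it is a positive prefix of `Δ`. -/
def IsSimple {n : ℕ} (s : Braid n) : Prop := s ∈ Pos n ∧ PrefixLE s (Δ n)

/-- A letter of the alphabet consisting of simple elements and their inverses. -/
def SimpleOrInv {n : ℕ} (a : Braid n) : Prop := IsSimple a ∨ IsSimple a⁻¹

/-- `len x` is `|x|`: the minimal length of a word representing `x` whose letters are
simple elements and their inverses. -/
noncomputable def len {n : ℕ} (x : Braid n) : ℕ :=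
  sInf {k | ∃ l : List (Braid n), (∀ a ∈ l, SimpleOrInv a) ∧ l.prod = x ∧ l.length = k}

/-! ### The mapping class group of the punctured sphere -/

/-- The free-group generator of index `k` (1-based out of `m-1` generators; out-of-range
indices map to `1`). -/
def fgen (m : ℕ) (k : ℕ) : FreeGroup (Fin (m - 1)) := if h : k < m - 1 then .of ⟨k, h⟩ else 1

/-- The word `σ₁ σ₂ ⋯ σ_{m-1}`. -/
def fullRow (m : ℕ) : FreeGroup (Fin (m - 1)) := ((List.range (m - 1)).map (fgen m)).prod

/-- The word `σ_{m-1} ⋯ σ₂ σ₁`. -/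
def fullRowRev (m : ℕ) : FreeGroup (Fin (m - 1)) :=
  ((List.range (m - 1)).reverse.map (fgen m)).prod

/-- Relations of the mapping class group of the `m`-times punctured sphere (Birman):
the braid relations together with `σ₁⋯σ_{m-1}σ_{m-1}⋯σ₁ = 1` and `(σ₁⋯σ_{m-1})^m = 1`. -/
def sphereRels (m : ℕ) : Set (FreeGroup (Fin (m - 1))) :=
  braidRels m ∪ {fullRow m * fullRowRev m, fullRow m ^ m}

/-- The mapping class group `MCG(S_m)` of the `m`-times punctured sphere. -/
abbrev SphereMCG (m : ℕ) := PresentedGroup (sphereRels m)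

/-- The half-twist generator `σ̂_k` of `MCG(S_m)`, `1 ≤ k ≤ m-1` (1-based; out-of-range
indices map to `1`). -/
def shat (m : ℕ) (k : ℕ) : SphereMCG m :=
  if h : 1 ≤ k ∧ k ≤ m - 1 then PresentedGroup.of ⟨k - 1, by omega⟩ else 1

/-- The rotation `ρ` of the `m`-times punctured sphere by the angle `2π/m`, which permutes
the `m` punctures cyclically; it equals `σ̂₁ σ̂₂ ⋯ σ̂_{m-1}`. -/
def ρSph (m : ℕ) : SphereMCG m := PresentedGroup.mk (sphereRels m) (fullRow m)

/-- The inclusion of generator indices of `B_n` into those of `MCG(S_{n+1})`. -/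
def embIdx (n : ℕ) (i : Fin (n - 1)) : Fin (n + 1 - 1) := ⟨i.1, by have := i.2; omega⟩

/-- The canonical homomorphism `B_n → MCG(S_{n+1})`, sending the Artin generator `σ_i` to the
half-twist `σ̂_i`; it is obtained by collapsing the boundary of the `n`-times punctured disk
to the `(n+1)`-st puncture of the sphere.  Its kernel is `⟨Δ²⟩`, so it identifies
`B_n/⟨Δ²⟩` with the subgroup of `MCG(S_{n+1})` of classes fixing the `(n+1)`-st puncture. -/
def brToSph (n : ℕ) : Braid n →* SphereMCG (n + 1) :=
  PresentedGroup.toGroup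
    (f := fun i => (PresentedGroup.of (embIdx n i) : SphereMCG (n + 1)))
    (by
      have key : ∀ r ∈ sphereRels (n + 1), PresentedGroup.mk (sphereRels (n + 1)) r = 1 :=
        fun r hr => (QuotientGroup.eq_one_iff r).2 (Subgroup.subset_normalClosure hr)
      have hcomp :
          FreeGroup.lift (fun i => (PresentedGroup.of (embIdx n i) : SphereMCG (n + 1))) =
            (PresentedGroup.mk (sphereRels (n + 1))).comp (FreeGroup.map (embIdx n)) := by
        apply FreeGroup.ext_hom
        intro a
        simp [PresentedGroup.of]
      intro r hr
      rw [hcomp, MonoidHom.comp_apply]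
      rcases hr with ⟨i, j, hij, rfl⟩ | ⟨i, j, hij, rfl⟩
      · have hmap : (FreeGroup.map (embIdx n))
            (.of i * .of j * .of i * (.of j * .of i * .of j)⁻¹) =
            (.of (embIdx n i) * .of (embIdx n j) * .of (embIdx n i) *
              (.of (embIdx n j) * .of (embIdx n i) * .of (embIdx n j))⁻¹) := by
          simp
        rw [hmap]
        exact key _ (Set.mem_union_left _
          (Or.inl ⟨embIdx n i, embIdx n j, by simpa [embIdx] using hij, rfl⟩))
      · have hmap : (FreeGroup.map (embIdx n))
            (.of i * .of j * (.of j * .of i)⁻¹) =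
            (.of (embIdx n i) * .of (embIdx n j) *
              (.of (embIdx n j) * .of (embIdx n i))⁻¹) := by
          simp
        rw [hmap]
        exact key _ (Set.mem_union_left _
          (Or.inr ⟨embIdx n i, embIdx n j, by simpa [embIdx] using hij, rfl⟩)))

/-- The images in `MCG(S_{n+1})` of the simple elements of `B_n`; these generate the image
of `B_n/⟨Δ²⟩`, and together with the rotation `ρ` they generate `MCG(S_{n+1})`. -/
def SimpleImg (n : ℕ) : Set (SphereMCG (n + 1)) :=
  {u | ∃ s : Braid n, IsSimple s ∧ u = brToSph n s}

/-- `‖u‖` : the word length of `u ∈ B_n/⟨Δ²⟩` (viewed inside `MCG(S_{n+1})`) with respect to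
the images of the simple elements and their inverses. -/
noncomputable def normLen (n : ℕ) (u : SphereMCG (n + 1)) : ℕ :=
  sInf {k | ∃ l : List (SphereMCG (n + 1)),
    (∀ a ∈ l, a ∈ SimpleImg n ∨ a⁻¹ ∈ SimpleImg n) ∧ l.prod = u ∧ l.length = k}

/-- `|u|_{G_n}` : the word length of `u ∈ MCG(S_{n+1})` with respect to the generating set
`G_n` consisting of the images of the simple elements together with the rotation `ρ`
(and inverses). -/
noncomputable def gnLen (n : ℕ) (u : SphereMCG (n + 1)) : ℕ :=
  sInf {k | ∃ l : List (SphereMCG (n + 1)),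
    (∀ a ∈ l, a ∈ SimpleImg n ∨ a⁻¹ ∈ SimpleImg n ∨ a = ρSph (n + 1) ∨ a = (ρSph (n + 1))⁻¹) ∧
      l.prod = u ∧ l.length = k}

/-!
Let `S` be the set of images of simple elements and their inverses, `H = ⟨ρ⟩`, and `N = n(n-1)/2`,
which is the length of `Δ` as a positive word.

The conjugates of `σ̂₁` by powers of `ρ` are the half-twists along the `n + 1` edges of the
regular polygon spanned by the punctures: `σ̂₁, …, σ̂ₙ` and one further edge, `ρ σ̂ₙ ρ⁻¹`. Each of
them, as well as its inverse, lies in `S * H`. For `σ̂₁, …, σ̂ₙ₋₁` this is clear, and for the two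
edges that meet the last puncture it follows from `ρ = (σ̂₁ ⋯ σ̂ₙ₋₁) σ̂ₙ` and
`ρ⁻¹ = σ̂ₙ (σ̂ₙ₋₁ ⋯ σ̂₁)`, where both brackets are simple. As rotations permute the edges, a power
of `ρ` can be moved from the left to the right of any word in edge twists, replacing each twist by
one letter of `S`. A simple element is a product of at most `N` of the `σ̂ᵢ`, so a word of length
`k` over `G_n` becomes an element of `S ^ (N k) * H`. The factor in `H` is trivial when the word
fixes the last puncture, since `ρ ^ r` moves that puncture unless `n + 1 ∣ r`.
-/

open scoped Pointwise

/-! ### Word length and pointwise powers -/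

section WordLength

variable {M : Type*} [Monoid M] {T : Set M} {g : M} {k : ℕ}

theorem mem_pow_iff_exists_list :
    g ∈ T ^ k ↔ ∃ l : List M, (∀ a ∈ l, a ∈ T) ∧ l.prod = g ∧ l.length = k := by
  rw [Set.mem_pow]
  constructor
  · rintro ⟨f, hf⟩
    exact ⟨List.ofFn fun i => (f i : M), by simp, hf, List.length_ofFn⟩
  · rintro ⟨l, hl, hprod, rfl⟩
    exact ⟨fun i => ⟨l.get i, hl _ (l.get_mem i)⟩, by simpa using hprod⟩

theorem mem_closure_iff_exists_mem_pow :
    g ∈ Submonoid.closure T ↔ ∃ k : ℕ, g ∈ T ^ k := by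
  constructor
  · intro hg
    obtain ⟨l, hl, hprod⟩ := Submonoid.exists_list_of_mem_closure hg
    exact ⟨l.length, mem_pow_iff_exists_list.2 ⟨l, hl, hprod, rfl⟩⟩
  · rintro ⟨k, hk⟩
    obtain ⟨l, hl, rfl, -⟩ := mem_pow_iff_exists_list.1 hk
    exact Submonoid.list_prod_mem _ fun a ha => Submonoid.subset_closure (hl a ha)

/-- The length of a shortest word over the alphabet `T` representing `g`, and the junk value `0`
if there is no such word. -/
noncomputable def wordLen (T : Set M) (g : M) : ℕ := sInf {k | g ∈ T ^ k}

theorem wordLen_le_of_mem_pow (hg : g ∈ T ^ k) : wordLen T g ≤ k := Nat.sInf_le hg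

theorem mem_pow_wordLen (hg : g ∈ Submonoid.closure T) : g ∈ T ^ wordLen T g :=
  Nat.sInf_mem (mem_closure_iff_exists_mem_pow.1 hg)

theorem mul_pow_subset_pow_mul {A B C : Set M} (h : A * B ⊆ C * A) (k : ℕ) :
    A * B ^ k ⊆ C ^ k * A := by
  induction k with
  | zero => simp
  | succ k ih =>
    calc A * B ^ (k + 1) = A * B ^ k * B := by rw [pow_succ, mul_assoc]
      _ ⊆ C ^ k * A * B := Set.mul_subset_mul_right ih
      _ ⊆ C ^ k * (C * A) := by rw [mul_assoc]; exact Set.mul_subset_mul_left h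
      _ = C ^ (k + 1) * A := by rw [pow_succ, mul_assoc]

end WordLength

theorem mul_subset_mul_of_conj_mem {G : Type*} [Group G] {H : Subgroup G} {C S : Set G}
    (hconj : ∀ h ∈ H, ∀ c ∈ C, h * c * h⁻¹ ∈ C) (hC : C ⊆ S * H) :
    (H : Set G) * C ⊆ S * H := by
  rintro _ ⟨h, hh, c, hc, rfl⟩
  obtain ⟨a, ha, h', hh', hprod : a * h' = _⟩ := hC (hconj h hh c hc)
  exact ⟨a, ha, h' * h, H.mul_mem hh' hh, by simp [← mul_assoc, hprod]⟩

/-! ### Words in a braid family -/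

section Words

variable {M N G : Type*} [Monoid M] [Monoid N] [Group G] {s : ℕ → M} {t : ℕ → N} {k m : ℕ}
  {l : List ℕ}

/-- The value of the word `l`, a list of indices, at the sequence `s`. -/
def wordProd (s : ℕ → M) (l : List ℕ) : M := (l.map s).prod

theorem wordProd_append (l l' : List ℕ) :
    wordProd s (l ++ l') = wordProd s l * wordProd s l' := by
  simp [wordProd]

theorem wordProd_range_succ : wordProd s (List.range (k + 1)) = wordProd s (List.range k) * s k :=
  List.prod_range_succ s k

theorem wordProd_reverse_range_succ :
    wordProd s (List.range (k + 1)).reverse = s k * wordProd s (List.range k).reverse := by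
  simp [wordProd, List.range_succ]

theorem wordProd_const (a : M) (l : List ℕ) : wordProd (fun _ => a) l = a ^ l.length := by
  simp [wordProd]

theorem wordProd_reverse (s : ℕ → G) (l : List ℕ) :
    wordProd s l.reverse = (wordProd (fun i => (s i)⁻¹) l)⁻¹ := by
  simp [wordProd, List.prod_inv_reverse, Function.comp_def]

theorem wordProd_mem {P : Submonoid M} (hP : ∀ i, s i ∈ P) (l : List ℕ) : wordProd s l ∈ P :=
  P.list_prod_mem (by simp [hP])

theorem map_wordProd (φ : M →* N) (hφ : ∀ i ∈ l, φ (s i) = t i) :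
    φ (wordProd s l) = wordProd t l := by
  rw [wordProd, map_list_prod, List.map_map]
  exact congrArg List.prod (List.map_congr_left hφ)

theorem semiconjBy_wordProd {a : M} {s t : ℕ → M} (h : ∀ i ∈ l, SemiconjBy a (s i) (t i)) :
    SemiconjBy a (wordProd s l) (wordProd t l) := by
  induction l with
  | nil => exact SemiconjBy.one_right a
  | cons i l ih =>
    rw [List.forall_mem_cons] at h
    simpa only [wordProd, List.map_cons, List.prod_cons] using h.1.mul_right (ih h.2)

/-- The word `0 (1 0) (2 1 0) ⋯ (k-1 ⋯ 0)` of the half-twist on `k + 1` strands. -/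
def halfTwistWord (k : ℕ) : List ℕ :=
  ((List.range k).map fun j => (List.range (j + 1)).reverse).flatten

theorem halfTwistWord_succ (k : ℕ) :
    halfTwistWord (k + 1) = halfTwistWord k ++ (List.range (k + 1)).reverse := by
  simp [halfTwistWord, List.range_succ (n := k)]

theorem lt_of_mem_halfTwistWord {i : ℕ} (hi : i ∈ halfTwistWord k) : i < k := by
  simp only [halfTwistWord, List.mem_flatten, List.mem_map, List.mem_range,
    exists_exists_and_eq_and, List.mem_reverse] at hi
  omega

theorem length_halfTwistWord (k : ℕ) : (halfTwistWord k).length = (k + 1).choose 2 := by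
  induction k with
  | zero => rfl
  | succ k ih =>
    rw [halfTwistWord_succ, List.length_append, ih, List.length_reverse, List.length_range,
      Nat.choose_succ_succ' (k + 1) 1, Nat.choose_one_right, add_comm]

/-- The first `m` terms of the sequence `s` satisfy the braid relations on `m + 1` strands. -/
structure IsBraidFamily (s : ℕ → M) (m : ℕ) : Prop where
  braid : ∀ i, i + 1 < m → s i * s (i + 1) * s i = s (i + 1) * s i * s (i + 1)
  commute : ∀ i j, i + 2 ≤ j → j < m → Commute (s i) (s j)

namespace IsBraidFamily

theorem inv {s : ℕ → G} (h : IsBraidFamily s m) : IsBraidFamily (fun i => (s i)⁻¹) m where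
  braid i hi := by simpa [mul_assoc] using congrArg (·⁻¹) (h.braid i hi)
  commute i j hij hj := (h.commute i j hij hj).inv_inv

theorem commute_wordProd (h : IsBraidFamily s m) {i : ℕ} (hi : i < m)
    (hl : ∀ j ∈ l, j + 2 ≤ i) : Commute (s i) (wordProd s l) :=
  semiconjBy_wordProd fun j hj => (h.commute j i (hl j hj) hi).symm

theorem semiconjBy_range (h : IsBraidFamily s m) {i : ℕ} (hi : i + 1 < k) (hk : k ≤ m) :
    SemiconjBy (wordProd s (List.range k)) (s i) (s (i + 1)) := by
  induction k, hi using Nat.le_induction with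
  | base =>
    have hcomm : Commute (s (i + 1)) (wordProd s (List.range i)) :=
      h.commute_wordProd (by omega) (by simp)
    rw [wordProd_range_succ, wordProd_range_succ, mul_assoc]
    refine SemiconjBy.mul_left (y := s (i + 1)) hcomm.symm ?_
    simpa only [SemiconjBy, mul_assoc] using h.braid i hk
  | succ k hik ih =>
    rw [wordProd_range_succ]
    exact (ih (by omega)).mul_left (h.commute i k hik hk).symm

theorem semiconjBy_reverse_range {s : ℕ → G} (h : IsBraidFamily s m) {i : ℕ} (hi : i + 1 < k)
    (hk : k ≤ m) :
    SemiconjBy (wordProd s (List.range k).reverse) (s (i + 1)) (s i) := by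
  rw [wordProd_reverse]
  exact SemiconjBy.inv_inv_symm_iff.1 (by simpa using h.inv.semiconjBy_range hi hk)

theorem halfTwistWord_succ_eq_range_mul (h : IsBraidFamily s m) (hk : k < m) :
    wordProd s (halfTwistWord (k + 1)) =
      wordProd s (List.range (k + 1)) * wordProd s (halfTwistWord k) := by
  induction k with
  | zero => simp [halfTwistWord, wordProd]
  | succ k ih =>
    have hcomm : Commute (s (k + 1)) (wordProd s (halfTwistWord k)) :=
      h.commute_wordProd hk fun j hj => by have := lt_of_mem_halfTwistWord hj; omega
    calc wordProd s (halfTwistWord (k + 1 + 1))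
        = wordProd s (List.range (k + 1)) * (wordProd s (halfTwistWord k) * s (k + 1)) *
            wordProd s (List.range (k + 1)).reverse := by
          rw [halfTwistWord_succ, wordProd_append, ih (by omega), wordProd_reverse_range_succ]
          simp only [mul_assoc]
      _ = wordProd s (List.range (k + 1 + 1)) * wordProd s (halfTwistWord (k + 1)) := by
          rw [← hcomm.eq, wordProd_range_succ (k := k + 1), halfTwistWord_succ k, wordProd_append]
          simp only [mul_assoc]

theorem halfTwistWord_succ_eq_reverse_range_mul {s : ℕ → G} (h : IsBraidFamily s m)
    (hk : k < m) :
    wordProd s (halfTwistWord (k + 1)) =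
      wordProd s (List.range (k + 1)).reverse *
        wordProd (fun i => s (i + 1)) (halfTwistWord k) := by
  rw [halfTwistWord_succ, wordProd_append]
  refine (semiconjBy_wordProd fun i hi => h.semiconjBy_reverse_range ?_ hk).eq.symm
  exact Nat.succ_lt_succ (lt_of_mem_halfTwistWord hi)

theorem lift_eq_one {s : ℕ → G} (h : IsBraidFamily s (m - 1)) {r : FreeGroup (Fin (m - 1))}
    (hr : r ∈ braidRels m) : FreeGroup.lift (fun i : Fin (m - 1) => s i) r = 1 := by
  rcases hr with ⟨i, j, hij, rfl⟩ | ⟨i, j, hij, rfl⟩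
  · rw [map_mul, map_inv, mul_inv_eq_one]
    simpa [← hij] using h.braid i (by omega)
  · rw [map_mul, map_inv, mul_inv_eq_one]
    simpa using (h.commute i j hij j.2).eq

end IsBraidFamily

theorem isBraidFamily_mk_fgen {rels : Set (FreeGroup (Fin (m - 1)))} (hrels : braidRels m ⊆ rels) :
    IsBraidFamily (fun i => PresentedGroup.mk rels (fgen m i)) (m - 1) where
  braid i hi := by
    simp only [← map_mul]
    refine PresentedGroup.mk_eq_mk_of_mul_inv_mem
      (hrels (Or.inl ⟨⟨i, by omega⟩, ⟨i + 1, hi⟩, rfl, ?_⟩))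
    simp [fgen, hi, show i < m - 1 by omega]
  commute i j hij hj := by
    simp only [commute_iff_eq, ← map_mul]
    refine PresentedGroup.mk_eq_mk_of_mul_inv_mem
      (hrels (Or.inr ⟨⟨i, by omega⟩, ⟨j, hj⟩, hij, ?_⟩))
    simp [fgen, hj, show i < m - 1 by omega]

end Words

/-! ### Simple braids -/

section SimpleBraids

variable {n : ℕ}

theorem σ'_eq_mk (i : ℕ) : σ' n i = PresentedGroup.mk (braidRels n) (fgen n i) := by
  by_cases hi : i < n - 1 <;> simp [σ', fgen, hi, σ, PresentedGroup.of]

theorem isBraidFamily_σ' (n : ℕ) : IsBraidFamily (σ' n) (n - 1) := by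
  simpa only [← σ'_eq_mk] using isBraidFamily_mk_fgen (subset_refl (braidRels n))

theorem σ'_mem_Pos (i : ℕ) : σ' n i ∈ Pos n := by
  unfold σ'
  split_ifs with hi
  · exact Submonoid.subset_closure (Set.mem_range_self _)
  · exact one_mem _

theorem Δ_eq_wordProd (n : ℕ) : Δ n = wordProd (σ' n) (halfTwistWord (n - 1)) := rfl

theorem PrefixLE.trans {x y z : Braid n} (hxy : PrefixLE x y) (hyz : PrefixLE y z) :
    PrefixLE x z := by
  simpa [PrefixLE, mul_assoc] using mul_mem hxy hyz

theorem prefixLE_mul_right {p : Braid n} (x : Braid n) (hp : p ∈ Pos n) : PrefixLE x (x * p) := by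
  simpa [PrefixLE] using hp

theorem wordProd_halfTwistWord_prefixLE {j k : ℕ} (hjk : j ≤ k) :
    PrefixLE (wordProd (σ' n) (halfTwistWord j)) (wordProd (σ' n) (halfTwistWord k)) := by
  induction k, hjk using Nat.le_induction with
  | base => simp [PrefixLE, one_mem]
  | succ k _ ih =>
    rw [halfTwistWord_succ, wordProd_append]
    exact ih.trans (prefixLE_mul_right _ (wordProd_mem σ'_mem_Pos _))

theorem wordProd_reverse_range_prefixLE {k : ℕ} (hk : k ≤ n - 1) :
    PrefixLE (wordProd (σ' n) (List.range k).reverse) (wordProd (σ' n) (halfTwistWord k)) := by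
  cases k with
  | zero => exact prefixLE_mul_right _ (one_mem _)
  | succ k =>
    rw [(isBraidFamily_σ' n).halfTwistWord_succ_eq_reverse_range_mul hk]
    exact prefixLE_mul_right _ (wordProd_mem (fun i => σ'_mem_Pos (i + 1)) _)

theorem wordProd_range_prefixLE {k : ℕ} (hk : k ≤ n - 1) :
    PrefixLE (wordProd (σ' n) (List.range k)) (wordProd (σ' n) (halfTwistWord k)) := by
  cases k with
  | zero => exact prefixLE_mul_right _ (one_mem _)
  | succ k =>
    rw [(isBraidFamily_σ' n).halfTwistWord_succ_eq_range_mul hk]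
    exact prefixLE_mul_right _ (wordProd_mem σ'_mem_Pos _)

theorem isSimple_one (n : ℕ) : IsSimple (1 : Braid n) :=
  ⟨one_mem _, by simpa [PrefixLE, Δ_eq_wordProd] using wordProd_mem σ'_mem_Pos _⟩

theorem isSimple_σ' {i : ℕ} (hi : i < n - 1) : IsSimple (σ' n i) := by
  have hrow : PrefixLE (σ' n i) (wordProd (σ' n) (List.range (i + 1)).reverse) := by
    rw [wordProd_reverse_range_succ]
    exact prefixLE_mul_right _ (wordProd_mem σ'_mem_Pos _)
  exact ⟨σ'_mem_Pos i, hrow.trans <|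
    (wordProd_reverse_range_prefixLE hi).trans (wordProd_halfTwistWord_prefixLE hi)⟩

theorem isSimple_range (n : ℕ) : IsSimple (wordProd (σ' n) (List.range (n - 1))) :=
  ⟨wordProd_mem σ'_mem_Pos _, wordProd_range_prefixLE le_rfl⟩

theorem isSimple_reverse_range (n : ℕ) :
    IsSimple (wordProd (σ' n) (List.range (n - 1)).reverse) :=
  ⟨wordProd_mem σ'_mem_Pos _, wordProd_reverse_range_prefixLE le_rfl⟩

/-- The exponent sum (abelianization) of a braid, which sends every Artin generator to `1`. -/
def exponentSum (n : ℕ) : Braid n →* Multiplicative ℤ :=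
  PresentedGroup.toGroup (f := fun _ => Multiplicative.ofAdd 1) fun _ hr =>
    IsBraidFamily.lift_eq_one (s := fun _ => _) ⟨fun _ _ => rfl, fun _ _ _ _ => .refl _⟩ hr

theorem exponentSum_σ (i : Fin (n - 1)) : exponentSum n (σ i) = Multiplicative.ofAdd 1 :=
  PresentedGroup.toGroup.of _

theorem exponentSum_of_mem_pow {x : Braid n} {k : ℕ} (hx : x ∈ (Set.range (σ (n := n))) ^ k) :
    exponentSum n x = Multiplicative.ofAdd 1 ^ k := by
  obtain ⟨l, hl, rfl, rfl⟩ := mem_pow_iff_exists_list.1 hx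
  rw [map_list_prod, List.prod_eq_pow_card (m := Multiplicative.ofAdd 1), List.length_map]
  simp only [List.mem_map, forall_exists_index, and_imp, forall_apply_eq_imp_iff₂]
  intro a ha
  obtain ⟨i, rfl⟩ := hl a ha
  exact exponentSum_σ i

theorem exponentSum_Δ (n : ℕ) : exponentSum n (Δ n) = Multiplicative.ofAdd 1 ^ n.choose 2 := by
  have hlength : (halfTwistWord (n - 1)).length = n.choose 2 := by
    cases n with
    | zero => rfl
    | succ n => exact length_halfTwistWord n
  rw [Δ_eq_wordProd, map_wordProd (t := fun _ => Multiplicative.ofAdd 1), wordProd_const, hlength]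
  intro i hi
  rw [σ', dif_pos (lt_of_mem_halfTwistWord hi), exponentSum_σ]

theorem IsSimple.exists_mem_pow {x : Braid n} (hx : IsSimple x) :
    ∃ k ≤ n.choose 2, x ∈ (Set.range (σ (n := n))) ^ k := by
  obtain ⟨k, hk⟩ := mem_closure_iff_exists_mem_pow.1 hx.1
  obtain ⟨k', hk'⟩ := mem_closure_iff_exists_mem_pow.1 hx.2
  have hsum : Multiplicative.ofAdd (1 : ℤ) ^ (k + k') = Multiplicative.ofAdd 1 ^ n.choose 2 := by
    rw [pow_add, ← exponentSum_of_mem_pow hk, ← exponentSum_of_mem_pow hk', ← map_mul,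
      mul_inv_cancel_left, exponentSum_Δ]
  simp only [← ofAdd_nsmul, nsmul_eq_mul, mul_one, EmbeddingLike.apply_eq_iff_eq,
    Nat.cast_inj] at hsum
  exact ⟨k, by omega, hk⟩

end SimpleBraids

/-! ### The mapping class group of the punctured sphere -/

section Sphere

/-- The half-twist `σ̂ᵢ₊₁`: this is `shat` with indices starting at `0`, as they do for `σ'`. -/
def twist (m i : ℕ) : SphereMCG m := shat m (i + 1)

theorem twist_eq_mk (m i : ℕ) : twist m i = PresentedGroup.mk (sphereRels m) (fgen m i) := by
  by_cases hi : i < m - 1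
  · simp [twist, shat, fgen, hi, Nat.succ_le_of_lt hi, PresentedGroup.of]
  · simp [twist, shat, fgen, hi]

theorem isBraidFamily_twist (m : ℕ) : IsBraidFamily (twist m) (m - 1) := by
  simpa only [← twist_eq_mk] using isBraidFamily_mk_fgen (rels := sphereRels m)
    Set.subset_union_left

theorem mk_wordProd_fgen (m : ℕ) (l : List ℕ) :
    PresentedGroup.mk (sphereRels m) (wordProd (fgen m) l) = wordProd (twist m) l :=
  map_wordProd _ fun i _ => (twist_eq_mk m i).symm

theorem ρSph_eq_wordProd (m : ℕ) : ρSph m = wordProd (twist m) (List.range (m - 1)) :=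
  mk_wordProd_fgen m _

theorem inv_ρSph_eq_wordProd (m : ℕ) :
    (ρSph m)⁻¹ = wordProd (twist m) (List.range (m - 1)).reverse := by
  have hrel : PresentedGroup.mk (sphereRels m) (fullRow m * fullRowRev m) = 1 :=
    PresentedGroup.one_of_mem (by simp [sphereRels])
  rw [map_mul] at hrel
  exact (inv_eq_of_mul_eq_one_right hrel).trans (mk_wordProd_fgen m _)

theorem ρSph_pow_self (m : ℕ) : ρSph m ^ m = 1 := by
  rw [ρSph, ← map_pow]
  exact PresentedGroup.one_of_mem (by simp [sphereRels])

variable {n : ℕ}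

theorem ρSph_eq_mul_twist (hn : 0 < n) :
    ρSph (n + 1) = wordProd (twist (n + 1)) (List.range (n - 1)) * twist (n + 1) (n - 1) := by
  rw [← wordProd_range_succ, Nat.sub_add_cancel hn]
  exact ρSph_eq_wordProd (n + 1)

theorem inv_ρSph_eq_twist_mul (hn : 0 < n) :
    (ρSph (n + 1))⁻¹ =
      twist (n + 1) (n - 1) * wordProd (twist (n + 1)) (List.range (n - 1)).reverse := by
  rw [← wordProd_reverse_range_succ, Nat.sub_add_cancel hn]
  exact inv_ρSph_eq_wordProd (n + 1)

theorem exists_ρSph_pow_eq_of_mem_zpowers {h : SphereMCG (n + 1)}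
    (hh : h ∈ Subgroup.zpowers (ρSph (n + 1))) : ∃ r ≤ n, ρSph (n + 1) ^ r = h := by
  obtain ⟨z, rfl⟩ := hh
  have hz : 0 ≤ z % (n + 1 : ℕ) := Int.emod_nonneg _ (by omega)
  have hz' : z % (n + 1 : ℕ) < (n + 1 : ℕ) := Int.emod_lt_of_pos _ (by omega)
  refine ⟨(z % (n + 1 : ℕ)).toNat, by omega, ?_⟩
  rw [← zpow_natCast, Int.toNat_of_nonneg hz, ← zpow_eq_zpow_emod' z (ρSph_pow_self (n + 1))]

theorem semiconjBy_ρSph_pow {i : ℕ} (hi : i < n) :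
    SemiconjBy (ρSph (n + 1) ^ i) (twist (n + 1) 0) (twist (n + 1) i) := by
  induction i with
  | zero => simp
  | succ i ih =>
    have hstep : SemiconjBy (ρSph (n + 1)) (twist (n + 1) i) (twist (n + 1) (i + 1)) := by
      rw [ρSph_eq_wordProd]
      exact (isBraidFamily_twist (n + 1)).semiconjBy_range hi le_rfl
    rw [pow_succ']
    exact hstep.mul_left (ih (by omega))

theorem brToSph_σ (i : Fin (n - 1)) : brToSph n (σ i) = twist (n + 1) i := by
  have hi : (i : ℕ) < n := by omega
  rw [twist_eq_mk, σ, brToSph, PresentedGroup.toGroup.of]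
  simp [fgen, PresentedGroup.of, embIdx, hi]

theorem brToSph_σ' {i : ℕ} (hi : i < n - 1) : brToSph n (σ' n i) = twist (n + 1) i := by
  rw [σ', dif_pos hi, brToSph_σ]

theorem range_brToSph_le {K : Subgroup (SphereMCG (n + 1))}
    (hK : ∀ i < n - 1, twist (n + 1) i ∈ K) : (brToSph n).range ≤ K := by
  rintro _ ⟨x, rfl⟩
  refine PresentedGroup.generated_by _ (K.comap (brToSph n)) (fun i => ?_) x
  rw [Subgroup.mem_comap]
  exact (brToSph_σ i).symm ▸ hK i i.2

end Sphere

/-! ### The permutation of the punctures -/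

section Punctures

/-- The adjacent transposition `(i i+1)`, by which `σ̂ᵢ₊₁` permutes the punctures `0, …, n`. -/
def adjSwap (i : ℕ) : Equiv.Perm ℕ := Equiv.swap i (i + 1)

theorem isBraidFamily_adjSwap (m : ℕ) : IsBraidFamily adjSwap m where
  braid i _ := by
    ext x
    simp only [adjSwap, Equiv.Perm.mul_apply, Equiv.swap_apply_def]
    split_ifs <;> omega
  commute i j hij _ := by
    ext x
    simp only [adjSwap, Equiv.Perm.mul_apply, Equiv.swap_apply_def]
    split_ifs <;> omega

theorem wordProd_adjSwap_range (k : ℕ) :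
    wordProd adjSwap (List.range k) = (List.range (k + 1)).formPerm := by
  induction k with
  | zero => rfl
  | succ k ih =>
    rw [wordProd_range_succ, ih, List.range_succ (n := k + 1), List.range_succ (n := k),
      List.append_assoc, List.singleton_append, List.formPerm_append_pair, adjSwap]

theorem wordProd_adjSwap_reverse (l : List ℕ) :
    wordProd adjSwap l.reverse = (wordProd adjSwap l)⁻¹ := by
  have hinv : (fun i => (adjSwap i)⁻¹) = adjSwap := funext fun i => Equiv.swap_inv i (i + 1)
  rw [wordProd_reverse, hinv]

/-- The action of `MCG(S_{n+1})` on the punctures `0, …, n`; all `x > n` are fixed. -/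
def punctureAction (n : ℕ) : SphereMCG (n + 1) →* Equiv.Perm ℕ :=
  PresentedGroup.toGroup (f := fun i : Fin (n + 1 - 1) => adjSwap i) (by
    have hword (l : List ℕ) (hl : ∀ i ∈ l, i < n) :
        FreeGroup.lift (fun i : Fin (n + 1 - 1) => adjSwap i) (wordProd (fgen (n + 1)) l) =
          wordProd adjSwap l :=
      map_wordProd _ fun i hi => by simp [fgen, hl i hi]
    have hrow := hword (List.range n) (by simp)
    have hrowRev := hword (List.range n).reverse (by simp)
    rintro r (hr | rfl | rfl)
    · exact (isBraidFamily_adjSwap _).lift_eq_one hr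
    · rw [map_mul]
      refine (congrArg₂ (· * ·) hrow hrowRev).trans ?_
      simp only [wordProd_adjSwap_reverse, mul_inv_cancel]
    · rw [map_pow]
      refine (congrArg (· ^ (n + 1)) hrow).trans ?_
      simpa [wordProd_adjSwap_range] using
        List.formPerm_pow_length_eq_one_of_nodup (List.range (n + 1)) List.nodup_range)

variable {n : ℕ}

theorem punctureAction_twist {i : ℕ} (hi : i < n) :
    punctureAction n (twist (n + 1) i) = adjSwap i := by
  rw [twist_eq_mk, fgen, dif_pos (show i < n + 1 - 1 from hi)]
  exact PresentedGroup.toGroup.of _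

theorem punctureAction_ρSph_pow_last (r : ℕ) :
    punctureAction n (ρSph (n + 1) ^ r) n = (n + r) % (n + 1) := by
  have hρ : punctureAction n (ρSph (n + 1)) = (List.range (n + 1)).formPerm := by
    rw [ρSph_eq_wordProd, map_wordProd (t := adjSwap), Nat.add_sub_cancel, wordProd_adjSwap_range]
    exact fun i hi => punctureAction_twist (List.mem_range.1 hi)
  rw [map_pow, hρ]
  simpa using List.formPerm_pow_apply_getElem (List.range (n + 1)) List.nodup_range r n (by simp)

theorem punctureAction_last_of_mem_range {u : SphereMCG (n + 1)} (hu : u ∈ (brToSph n).range) :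
    punctureAction n u n = n := by
  refine range_brToSph_le
    (K := (MulAction.stabilizer (Equiv.Perm ℕ) n).comap (punctureAction n)) (fun i hi => ?_) hu
  rw [Subgroup.mem_comap, punctureAction_twist (by omega), MulAction.mem_stabilizer_iff,
    Equiv.Perm.smul_def, adjSwap, Equiv.swap_apply_of_ne_of_ne (by omega) (by omega)]

theorem eq_one_of_mem_zpowers_ρSph {h : SphereMCG (n + 1)}
    (hh : h ∈ Subgroup.zpowers (ρSph (n + 1))) (hrange : h ∈ (brToSph n).range) : h = 1 := by
  obtain ⟨r, hr, rfl⟩ := exists_ρSph_pow_eq_of_mem_zpowers hh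
  have hfix := punctureAction_last_of_mem_range hrange
  rw [punctureAction_ρSph_pow_last] at hfix
  obtain rfl | hr0 := r.eq_zero_or_pos
  · exact pow_zero _
  · rw [show n + r = r - 1 + (n + 1) by omega, Nat.add_mod_right,
      Nat.mod_eq_of_lt (by omega)] at hfix
    omega

end Punctures

/-! ### Letters and edge twists -/

section Letters

/-- The alphabet of `‖·‖`: the images of the simple elements and their inverses. -/
def simpleLetters (n : ℕ) : Set (SphereMCG (n + 1)) := SimpleImg n ∪ (SimpleImg n)⁻¹

/-- The alphabet of `|·|_{G_n}`: the set `G_n` and the inverses of its elements. -/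
def gnLetters (n : ℕ) : Set (SphereMCG (n + 1)) :=
  simpleLetters n ∪ {ρSph (n + 1), (ρSph (n + 1))⁻¹}

variable {n : ℕ}

theorem normLen_eq_wordLen (u : SphereMCG (n + 1)) :
    normLen n u = wordLen (simpleLetters n) u := by
  simp only [normLen, wordLen, mem_pow_iff_exists_list, simpleLetters, Set.mem_union, Set.mem_inv]

theorem gnLen_eq_wordLen (u : SphereMCG (n + 1)) : gnLen n u = wordLen (gnLetters n) u := by
  simp only [gnLen, wordLen, mem_pow_iff_exists_list, gnLetters, simpleLetters, Set.mem_union,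
    Set.mem_inv, Set.mem_insert_iff, Set.mem_singleton_iff, or_assoc]

theorem inv_mem_simpleLetters {a : SphereMCG (n + 1)} (ha : a ∈ simpleLetters n) :
    a⁻¹ ∈ simpleLetters n := by
  simpa [simpleLetters, or_comm] using ha

theorem brToSph_mem_simpleLetters {x : Braid n} (hx : IsSimple x) :
    brToSph n x ∈ simpleLetters n :=
  Or.inl ⟨x, hx, rfl⟩

theorem one_mem_simpleLetters (n : ℕ) : 1 ∈ simpleLetters n := by
  simpa using brToSph_mem_simpleLetters (isSimple_one n)

theorem twist_mem_simpleLetters {i : ℕ} (hi : i < n - 1) : twist (n + 1) i ∈ simpleLetters n :=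
  brToSph_σ' hi ▸ brToSph_mem_simpleLetters (isSimple_σ' hi)

theorem wordProd_range_mem_simpleLetters (n : ℕ) :
    wordProd (twist (n + 1)) (List.range (n - 1)) ∈ simpleLetters n := by
  rw [← map_wordProd (brToSph n) fun i hi => brToSph_σ' (List.mem_range.1 hi)]
  exact brToSph_mem_simpleLetters (isSimple_range n)

theorem wordProd_reverse_range_mem_simpleLetters (n : ℕ) :
    wordProd (twist (n + 1)) (List.range (n - 1)).reverse ∈ simpleLetters n := by
  rw [← map_wordProd (brToSph n) fun i hi => brToSph_σ' (by simpa using hi)]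
  exact brToSph_mem_simpleLetters (isSimple_reverse_range n)

theorem simpleLetters_subset_range (n : ℕ) : simpleLetters n ⊆ (brToSph n).range := by
  rintro a (⟨x, -, rfl⟩ | ⟨x, -, hx⟩)
  · exact ⟨x, rfl⟩
  · exact ⟨x⁻¹, by rw [map_inv, ← hx, inv_inv]⟩

theorem simpleLetters_pow_subset_range (n k : ℕ) : simpleLetters n ^ k ⊆ (brToSph n).range :=
  fun _ hg => Submonoid.closure_le (S := (brToSph n).range.toSubmonoid).2
    (simpleLetters_subset_range n) (mem_closure_iff_exists_mem_pow.2 ⟨k, hg⟩)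

theorem mem_closure_gnLetters {u : SphereMCG (n + 1)} (hu : u ∈ (brToSph n).range) :
    u ∈ Submonoid.closure (gnLetters n) := by
  have hgen : u ∈ Subgroup.closure (SimpleImg n) :=
    range_brToSph_le (fun i hi => Subgroup.subset_closure
      (show _ ∈ SimpleImg n from ⟨σ' n i, isSimple_σ' hi, (brToSph_σ' hi).symm⟩)) hu
  rw [← Subgroup.mem_toSubmonoid, Subgroup.closure_toSubmonoid] at hgen
  exact Submonoid.closure_mono Set.subset_union_left hgen

/-- The half-twists along the `n + 1` edges of the regular polygon spanned by the punctures, that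
is, the conjugates of `σ̂₁` by the powers of `ρ`. -/
def edgeTwists (n : ℕ) : Set (SphereMCG (n + 1)) :=
  {c | ∃ h ∈ Subgroup.zpowers (ρSph (n + 1)), h * twist (n + 1) 0 * h⁻¹ = c}

theorem conj_mem_edgeTwists {h c : SphereMCG (n + 1)}
    (hh : h ∈ Subgroup.zpowers (ρSph (n + 1))) (hc : c ∈ edgeTwists n) :
    h * c * h⁻¹ ∈ edgeTwists n := by
  obtain ⟨g, hg, rfl⟩ := hc
  exact ⟨h * g, mul_mem hh hg, by group⟩

theorem twist_mem_edgeTwists {i : ℕ} (hi : i < n) : twist (n + 1) i ∈ edgeTwists n :=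
  ⟨_, Subgroup.npow_mem_zpowers _ i, mul_inv_eq_of_eq_mul (semiconjBy_ρSph_pow hi).eq⟩

theorem eq_twist_of_mem_edgeTwists (hn : 0 < n) {c : SphereMCG (n + 1)} (hc : c ∈ edgeTwists n) :
    (∃ i < n, c = twist (n + 1) i) ∨
      c = ρSph (n + 1) * twist (n + 1) (n - 1) * (ρSph (n + 1))⁻¹ := by
  have hconj {i : ℕ} (hi : i < n) := mul_inv_eq_of_eq_mul (semiconjBy_ρSph_pow hi).eq
  obtain ⟨h, hh, rfl⟩ := hc
  obtain ⟨r, hr, rfl⟩ := exists_ρSph_pow_eq_of_mem_zpowers hh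
  obtain hr | rfl := hr.lt_or_eq
  · exact Or.inl ⟨r, hr, hconj hr⟩
  · right
    rw [← mul_pow_sub_one hn.ne' (ρSph (r + 1)), ← hconj (Nat.sub_lt hn one_pos)]
    group

theorem edgeTwists_subset (hn : 0 < n) :
    edgeTwists n ⊆ simpleLetters n * Subgroup.zpowers (ρSph (n + 1)) := by
  have hρ := Subgroup.mem_zpowers (ρSph (n + 1))
  intro c hc
  obtain ⟨i, hi, rfl⟩ | rfl := eq_twist_of_mem_edgeTwists hn hc
  · obtain hi | rfl : i < n - 1 ∨ i = n - 1 := by omega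
    · exact ⟨_, twist_mem_simpleLetters hi, 1, one_mem _, mul_one _⟩
    · exact ⟨_, inv_mem_simpleLetters (wordProd_range_mem_simpleLetters n), _, hρ,
        inv_mul_eq_of_eq_mul (ρSph_eq_mul_twist hn)⟩
  · refine ⟨_, inv_mem_simpleLetters (wordProd_reverse_range_mem_simpleLetters n), _,
      inv_mem hρ, congrArg (· * (ρSph (n + 1))⁻¹) ?_⟩
    rw [inv_eq_iff_eq_inv, mul_inv_rev]
    exact eq_inv_mul_of_mul_eq (inv_ρSph_eq_twist_mul hn).symm

theorem inv_edgeTwists_subset (hn : 0 < n) :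
    (edgeTwists n)⁻¹ ⊆ simpleLetters n * Subgroup.zpowers (ρSph (n + 1)) := by
  have hρ := Subgroup.mem_zpowers (ρSph (n + 1))
  intro c hc
  rw [← inv_inv c]
  obtain ⟨i, hi, hc⟩ | hc := eq_twist_of_mem_edgeTwists hn hc <;> rw [hc]
  · obtain hi | rfl : i < n - 1 ∨ i = n - 1 := by omega
    · exact ⟨_, inv_mem_simpleLetters (twist_mem_simpleLetters hi), 1, one_mem _, mul_one _⟩
    · refine ⟨_, wordProd_reverse_range_mem_simpleLetters n, _, hρ, ?_⟩
      exact mul_eq_of_eq_mul_inv (eq_inv_mul_of_mul_eq (inv_ρSph_eq_twist_mul hn).symm)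
  · refine ⟨_, wordProd_range_mem_simpleLetters n, _, inv_mem hρ, ?_⟩
    dsimp only
    rw [conj_inv, eq_mul_inv_of_mul_eq (ρSph_eq_mul_twist hn).symm]

theorem brToSph_mem_edgeTwists_pow {x : Braid n} (hx : IsSimple x) :
    ∃ k ≤ n.choose 2, brToSph n x ∈ edgeTwists n ^ k := by
  obtain ⟨k, hk, hxk⟩ := hx.exists_mem_pow
  refine ⟨k, hk, Set.pow_subset_pow_left ?_ (Set.image_pow (brToSph n) _ k ▸
    Set.mem_image_of_mem _ hxk)⟩
  rintro _ ⟨_, ⟨i, rfl⟩, rfl⟩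
  exact (brToSph_σ i).symm ▸ twist_mem_edgeTwists (by omega)

theorem mem_edgeTwists_pow_of_mem_simpleLetters {a : SphereMCG (n + 1)}
    (ha : a ∈ simpleLetters n) :
    ∃ k ≤ n.choose 2, a ∈ edgeTwists n ^ k ∨ a ∈ (edgeTwists n)⁻¹ ^ k := by
  obtain ⟨x, hx, rfl⟩ | ⟨x, hx, hax⟩ := ha
  · obtain ⟨k, hk, hxk⟩ := brToSph_mem_edgeTwists_pow hx
    exact ⟨k, hk, Or.inl hxk⟩
  · obtain ⟨k, hk, hxk⟩ := brToSph_mem_edgeTwists_pow hx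
    exact ⟨k, hk, Or.inr (by rwa [inv_pow, Set.mem_inv, hax])⟩

theorem zpowers_mul_simpleLetters_subset (hn : 0 < n) :
    (Subgroup.zpowers (ρSph (n + 1)) : Set (SphereMCG (n + 1))) * simpleLetters n ⊆
      simpleLetters n ^ n.choose 2 * Subgroup.zpowers (ρSph (n + 1)) := by
  have htwists := mul_subset_mul_of_conj_mem
    (fun h hh c hc => conj_mem_edgeTwists (n := n) hh hc) (edgeTwists_subset hn)
  have hinvTwists := mul_subset_mul_of_conj_mem
    (fun h hh c (hc : c ∈ (edgeTwists n)⁻¹) => show h * c * h⁻¹ ∈ (edgeTwists n)⁻¹ by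
      simpa only [Set.mem_inv, conj_inv] using conj_mem_edgeTwists hh hc)
    (inv_edgeTwists_subset hn)
  rintro _ ⟨h, hh, a, ha, rfl⟩
  obtain ⟨k, hk, hak⟩ := mem_edgeTwists_pow_of_mem_simpleLetters ha
  refine Set.mul_subset_mul_right (Set.pow_subset_pow_right (one_mem_simpleLetters n) hk) ?_
  obtain hak | hak := hak
  · exact mul_pow_subset_pow_mul htwists k ⟨h, hh, a, hak, rfl⟩
  · exact mul_pow_subset_pow_mul hinvTwists k ⟨h, hh, a, hak, rfl⟩

theorem zpowers_mul_gnLetters_subset (hn : 0 < n) :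
    (Subgroup.zpowers (ρSph (n + 1)) : Set (SphereMCG (n + 1))) * gnLetters n ⊆
      simpleLetters n ^ n.choose 2 * Subgroup.zpowers (ρSph (n + 1)) := by
  rw [gnLetters, Set.mul_union]
  refine Set.union_subset (zpowers_mul_simpleLetters_subset hn) ?_
  rintro _ ⟨h, hh, g, hg, rfl⟩
  have hgmem : g ∈ Subgroup.zpowers (ρSph (n + 1)) := by
    obtain rfl | rfl := hg
    · exact Subgroup.mem_zpowers _
    · exact inv_mem (Subgroup.mem_zpowers _)
  exact ⟨1, Set.one_mem_pow (one_mem_simpleLetters n), h * g, mul_mem hh hgmem, one_mul _⟩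

end Letters

/-- **Lemma.** For every `u ∈ B_n/⟨Δ²⟩` (identified with its image in `MCG(S_{n+1})`),
`‖u‖ ≤ (n(n-1)/2) · |u|_{G_n}`. -/
theorem normLen_le_gnLen (n : ℕ) (hn : 3 ≤ n) (u : SphereMCG (n + 1))
    (hu : u ∈ (brToSph n).range) :
    normLen n u ≤ (n * (n - 1) / 2) * gnLen n u := by
  have hword : u ∈ gnLetters n ^ gnLen n u :=
    gnLen_eq_wordLen u ▸ mem_pow_wordLen (mem_closure_gnLetters hu)
  obtain ⟨x, hx, h, hh, rfl⟩ :
      u ∈ (simpleLetters n ^ n.choose 2) ^ gnLen n u * Subgroup.zpowers (ρSph (n + 1)) :=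
    mul_pow_subset_pow_mul (zpowers_mul_gnLetters_subset (by omega)) _
      ⟨1, one_mem _, u, hword, one_mul u⟩
  rw [← pow_mul] at hx
  have hxrange : x ∈ (brToSph n).range := simpleLetters_pow_subset_range n _ hx
  obtain rfl : h = 1 :=
    eq_one_of_mem_zpowers_ρSph hh ((Subgroup.mul_mem_cancel_left _ hxrange).1 hu)
  rw [← Nat.choose_two_right, normLen_eq_wordLen]
  exact wordLen_le_of_mem_pow (by simpa using hx)

end Braids
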